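/- arXiv:2605.02254 — 5 statements merged into one kernel-verified Lean document; each statement's English description precedes it below -/
import Mathlib

section
/- Let n ≥ 2 and let S_2 be a subset of the cyclic subgroup ⟨a⟩ of the dihedral group D_n. Then η_h(S_2) = 0 for every integer h with 1 ≤ h ≤ ⌊(n−1)/2⌋ if and only if: when n is odd, S_2 ∈ {∅, ⟨a⟩}; and when n is even, S_2 ∈ {∅, ⟨a⟩, ⟨a²⟩, a⟨a²⟩}, where ⟨a²⟩ = {a^{2k} : 0 ≤ k ≤ n/2 − 1} and a⟨a²⟩ = {a^{2k+1} : 0 ≤ k ≤ n/2 − 1}. -/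
/-!
The sum `η_h(C)` is the discrete Fourier transform, at frequency `-h`, of the indicator `f` of
`{k : a^k ∈ C}` on `ℤ/n`. Since `f` is real, the transform vanishes at `x` iff it vanishes at `-x`;
hence the vanishing of `η_h(C)` for `1 ≤ h ≤ ⌊(n-1)/2⌋` says that the transform vanishes at every
frequency `x` with `2x ≠ 0`. Translating `f` by `2` multiplies the transform at `x` by a root of
unity that equals `1` exactly when `2x = 0`, so by injectivity of the transform the condition means
that `f` has period `2`.

A subset of `ℤ/n` with period `2` is empty, everything, the set of even residues or the set of odd
residues, where a residue is even if it is a multiple of `2` in the ring `ℤ/n`. For odd `n` every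
residue is both even and odd.
-/

open Polynomial Matrix

noncomputable section

namespace PaperPST

/-! ### Grover-walk PST data for Cayley graphs over a general finite group -/

/-- The adjacency matrix of the Cayley graph `Cay(Γ, S)`: `A u v = 1` iff `u * v⁻¹ ∈ S`. -/
def adjG (Γ : Type*) [Group Γ] [Fintype Γ] [DecidableEq Γ] (S : Finset Γ) : Matrix Γ Γ ℂ :=
  Matrix.of fun u v => if u * v⁻¹ ∈ S then 1 else 0

/-- The discriminant matrix `P = (1/|S|) A` of `Cay(Γ, S)`. -/
def discG (Γ : Type*) [Group Γ] [Fintype Γ] [DecidableEq Γ] (S : Finset Γ) : Matrix Γ Γ ℂ :=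
  (S.card : ℂ)⁻¹ • adjG Γ S

/-- `T_τ(P)`, the `τ`-th Chebyshev polynomial of the first kind evaluated at the
discriminant matrix of `Cay(Γ, S)`. -/
def chebG (Γ : Type*) [Group Γ] [Fintype Γ] [DecidableEq Γ] (S : Finset Γ) (τ : ℕ) :
    Matrix Γ Γ ℂ :=
  Polynomial.aeval (discG Γ S) (Polynomial.Chebyshev.T ℂ τ)

/-- Perfect state transfer between vertices `u` and `v` of `Cay(Γ, S)` at time `τ`:
`T_τ(P) e_u = e_v`. -/
def PSTG (Γ : Type*) [Group Γ] [Fintype Γ] [DecidableEq Γ] (S : Finset Γ) (τ : ℕ)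
    (u v : Γ) : Prop :=
  chebG Γ S τ *ᵥ Pi.single u 1 = Pi.single v 1

/-- Evaluation of the `τ`-th Chebyshev polynomial of the first kind at a complex number. -/
def Teval (τ : ℕ) (x : ℂ) : ℂ := (Polynomial.Chebyshev.T ℂ τ).eval x

/-! ### Specialization to the dihedral group `D_n` -/

/-- Test whether an element of the dihedral group is a rotation `a^k`. -/
def isRot {n : ℕ} : DihedralGroup n → Bool
  | .r _ => true
  | .sr _ => false

/-- The adjacency matrix of the Cayley graph `Cay(D_n, S)`. -/
def adjC (n : ℕ) (S : Finset (DihedralGroup n)) :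
    Matrix (DihedralGroup n) (DihedralGroup n) ℂ :=
  Matrix.of fun u v => if u * v⁻¹ ∈ S then 1 else 0

/-- The discriminant matrix `P = (1/|S|) A` of `Cay(D_n, S)`. -/
def disc (n : ℕ) (S : Finset (DihedralGroup n)) :
    Matrix (DihedralGroup n) (DihedralGroup n) ℂ :=
  (S.card : ℂ)⁻¹ • adjC n S

/-- `T_τ(P)`, the `τ`-th Chebyshev polynomial of the first kind evaluated at the
discriminant matrix. -/
def chebP (n : ℕ) [NeZero n] (S : Finset (DihedralGroup n)) (τ : ℕ) :
    Matrix (DihedralGroup n) (DihedralGroup n) ℂ :=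
  Polynomial.aeval (disc n S) (Polynomial.Chebyshev.T ℂ τ)

/-- Perfect state transfer between vertices `u` and `v` of `Cay(D_n, S)` at time `τ`:
`T_τ(P) e_u = e_v`. -/
def PST (n : ℕ) [NeZero n] (S : Finset (DihedralGroup n)) (τ : ℕ)
    (u v : DihedralGroup n) : Prop :=
  chebP n S τ *ᵥ Pi.single u 1 = Pi.single v 1

/-- `ω = e^{2πi/n}`. -/
def omega (n : ℕ) : ℂ := Complex.exp (2 * Real.pi * Complex.I / n)

/-- `η_h(C) = Σ_{0 ≤ k ≤ n-1, a^k ∈ C} ω^{hk}`. -/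
def eta (n : ℕ) (h : ℕ) (C : Finset (DihedralGroup n)) : ℂ :=
  ∑ k ∈ Finset.range n, if DihedralGroup.r (k : ZMod n) ∈ C then omega n ^ (h * k) else 0

/-- `S_1 = S ∩ ⟨a⟩`. -/
def S1 (n : ℕ) (S : Finset (DihedralGroup n)) : Finset (DihedralGroup n) :=
  S.filter fun x => isRot x

/-- `S_2 = bS ∩ ⟨a⟩`, i.e. `{a^k : b a^k ∈ S}`. -/
def S2 (n : ℕ) (S : Finset (DihedralGroup n)) : Finset (DihedralGroup n) :=
  (S.image fun s => DihedralGroup.sr 0 * s).filter fun x => isRot x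

/-- `S_2⁻¹ = {s⁻¹ : s ∈ S_2}`. -/
def S2inv (n : ℕ) (S : Finset (DihedralGroup n)) : Finset (DihedralGroup n) :=
  (S2 n S).image fun x => x⁻¹

/-- The number of `a^k ∈ C` with `0 ≤ k ≤ n-1` and `k % 2 = p`. -/
def dcnt (n : ℕ) (C : Finset (DihedralGroup n)) (p : ℕ) : ℕ :=
  ((Finset.range n).filter fun k => k % 2 = p ∧ DihedralGroup.r (k : ZMod n) ∈ C).card

/-- Vertex labels `0, …, 2n-1`: label `u < n` is `a^u`, and label `n ≤ u < 2n` is `b a^{u-n}`. -/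
def lab (n : ℕ) (u : ℕ) : DihedralGroup n :=
  if u < n then DihedralGroup.r (u : ZMod n) else DihedralGroup.sr ((u - n : ℕ) : ZMod n)

/-- `Cay(D_n, S)` is a normal Cayley graph if `S` is closed under conjugation. -/
def IsNormalCay (n : ℕ) (S : Finset (DihedralGroup n)) : Prop :=
  ∀ g : DihedralGroup n, ∀ s ∈ S, g * s * g⁻¹ ∈ S

/-- `Cay(D_n, S)` exhibits PST at the minimum time `τ`. -/
def exhibitsMinPST (n : ℕ) [NeZero n] (S : Finset (DihedralGroup n)) (τ : ℕ) : Prop :=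
  (∃ u v : DihedralGroup n, u ≠ v ∧ PST n S τ u v) ∧
  ∀ σ : ℕ, 1 ≤ σ → σ < τ → ∀ u v : DihedralGroup n, u ≠ v → ¬ PST n S σ u v

/-! ### Eigenvector candidates -/

/-- The all-ones vector. -/
def w1 (n : ℕ) : DihedralGroup n → ℂ := fun _ => 1

/-- The vector which is `1` on `G_0` and `-1` on `G_1`. -/
def w2 (n : ℕ) : DihedralGroup n → ℂ
  | .r _ => 1
  | .sr _ => -1

/-- The vector with entry `(-1)^k` at `a^k` and `(-1)^k` at `b a^k`. -/
def w3 (n : ℕ) : DihedralGroup n → ℂ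
  | .r k => (-1) ^ k.val
  | .sr k => (-1) ^ k.val

/-- The vector with entry `(-1)^k` at `a^k` and `(-1)^{k+1}` at `b a^k`. -/
def w4 (n : ℕ) : DihedralGroup n → ℂ
  | .r k => (-1) ^ k.val
  | .sr k => (-1) ^ (k.val + 1)

/-- The vector with entry `ω^{hk}` at `a^k` and `0` at `b a^k`. -/
def uv1 (n h : ℕ) : DihedralGroup n → ℂ
  | .r k => omega n ^ (h * k.val)
  | .sr _ => 0

/-- The vector with entry `0` at `a^k` and `ω^{hk}` at `b a^k`. -/
def uv2 (n h : ℕ) : DihedralGroup n → ℂ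
  | .r _ => 0
  | .sr k => omega n ^ (h * k.val)

/-- The vector with entry `0` at `a^k` and `ω^{-hk}` at `b a^k`. -/
def uv3 (n h : ℕ) : DihedralGroup n → ℂ
  | .r _ => 0
  | .sr k => (omega n)⁻¹ ^ (h * k.val)

/-- The vector with entry `ω^{-hk}` at `a^k` and `0` at `b a^k`. -/
def uv4 (n h : ℕ) : DihedralGroup n → ℂ
  | .r k => (omega n)⁻¹ ^ (h * k.val)
  | .sr _ => 0

/-- The vector with entry `conj(ℓ)·ω^{hk}` at `a^k` and `ω^{hk}` at `b a^k`. -/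
def vv1 (n h : ℕ) (ℓ : ℂ) : DihedralGroup n → ℂ
  | .r k => (starRingEnd ℂ) ℓ * omega n ^ (h * k.val)
  | .sr k => omega n ^ (h * k.val)

/-- The vector with entry `ω^{-hk}` at `a^k` and `conj(ℓ)·ω^{-hk}` at `b a^k`. -/
def vv2 (n h : ℕ) (ℓ : ℂ) : DihedralGroup n → ℂ
  | .r k => (omega n)⁻¹ ^ (h * k.val)
  | .sr k => (starRingEnd ℂ) ℓ * (omega n)⁻¹ ^ (h * k.val)

/-- The vector with entry `-ω^{hk}` at `a^k` and `ℓ·ω^{hk}` at `b a^k`. -/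
def vv3 (n h : ℕ) (ℓ : ℂ) : DihedralGroup n → ℂ
  | .r k => -(omega n ^ (h * k.val))
  | .sr k => ℓ * omega n ^ (h * k.val)

/-- The vector with entry `ℓ·ω^{-hk}` at `a^k` and `-ω^{-hk}` at `b a^k`. -/
def vv4 (n h : ℕ) (ℓ : ℂ) : DihedralGroup n → ℂ
  | .r k => ℓ * (omega n)⁻¹ ^ (h * k.val)
  | .sr k => -((omega n)⁻¹ ^ (h * k.val))

section Fourier

open scoped ZMod ComplexConjugate

variable {n : ℕ} [NeZero n]

lemma stdAddChar_eq_one_iff {x : ZMod n} : ZMod.stdAddChar x = 1 ↔ x = 0 := by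
  rw [← ZMod.injective_stdAddChar.eq_iff, AddChar.map_zero_eq_one]

section Module

variable {E : Type*} [AddCommGroup E] [Module ℂ E]

lemma dft_comp_add_right (f : ZMod n → E) (a x : ZMod n) :
    𝓕 (fun k => f (k + a)) x = ZMod.stdAddChar (a * x) • 𝓕 f x := by
  simp only [ZMod.dft_apply, Finset.smul_sum, smul_smul, ← AddChar.map_add_eq_mul]
  refine Fintype.sum_equiv (Equiv.addRight a) _ _ fun k => ?_
  rw [Equiv.coe_addRight, show a * x + -((k + a) * x) = -(k * x) by ring]

lemma periodic_iff_dft_eq_zero {f : ZMod n → E} {a : ZMod n} :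
    Function.Periodic f a ↔ ∀ x, a * x ≠ 0 → 𝓕 f x = 0 := by
  have dft_translate_eq_iff (x : ZMod n) :
      𝓕 (fun k => f (k + a)) x = 𝓕 f x ↔ (a * x ≠ 0 → 𝓕 f x = 0) := by
    rw [dft_comp_add_right, ← sub_eq_zero]
    nth_rw 2 [← one_smul ℂ (𝓕 f x)]
    rw [← sub_smul, smul_eq_zero, sub_eq_zero, stdAddChar_eq_one_iff, or_iff_not_imp_left]
  calc Function.Periodic f a
    _ ↔ (fun k => f (k + a)) = f := funext_iff.symm
    _ ↔ 𝓕 (fun k => f (k + a)) = 𝓕 f := ZMod.dft.injective.eq_iff.symm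
    _ ↔ ∀ x, a * x ≠ 0 → 𝓕 f x = 0 := funext_iff.trans (forall_congr' dft_translate_eq_iff)

end Module

lemma dft_conj_neg (f : ZMod n → ℂ) (x : ZMod n) :
    𝓕 (fun k => conj (f k)) (-x) = conj (𝓕 f x) := by
  simp only [ZMod.dft_apply, smul_eq_mul, map_sum, map_mul, ← AddChar.map_neg_eq_conj, mul_neg]

lemma dft_neg_eq_zero_iff {f : ZMod n → ℂ} (hf : ∀ k, conj (f k) = f k) (x : ZMod n) :
    𝓕 f (-x) = 0 ↔ 𝓕 f x = 0 := by
  have dft_neg := dft_conj_neg f x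
  simp only [hf] at dft_neg
  rw [dft_neg, map_eq_zero]

end Fourier

section Residues

variable {n : ℕ}

lemma sum_range_natCast_zmod [NeZero n] {M : Type*} [AddCommMonoid M] (g : ZMod n → M) :
    ∑ k ∈ Finset.range n, g k = ∑ k, g k :=
  Finset.sum_nbij' (fun k => (k : ZMod n)) ZMod.val (fun _ _ => Finset.mem_univ _)
    (fun k _ => Finset.mem_range.2 k.val_lt)
    (fun _ hk => ZMod.val_natCast_of_lt (Finset.mem_range.1 hk))
    (fun k _ => ZMod.natCast_zmod_val k) (fun _ _ => rfl)

lemma two_mul_natCast_zmod_ne_zero {h : ℕ} (h_pos : 1 ≤ h) (h_le : h ≤ (n - 1) / 2) :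
    2 * (h : ZMod n) ≠ 0 := by
  intro h_zero
  have h_dvd : n ∣ 2 * h := (ZMod.natCast_eq_zero_iff _ _).1 (by exact_mod_cast h_zero)
  have := Nat.le_of_dvd (by omega) h_dvd
  omega

lemma exists_natCast_le_half_eq_or_neg_eq [NeZero n] {x : ZMod n} (hx : 2 * x ≠ 0) :
    ∃ h : ℕ, 1 ≤ h ∧ h ≤ (n - 1) / 2 ∧ ((h : ZMod n) = x ∨ -(h : ZMod n) = x) := by
  have val_lt : x.val < n := x.val_lt
  have val_ne_zero : x.val ≠ 0 := fun h => hx (by rw [(ZMod.val_eq_zero x).1 h, mul_zero])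
  have two_mul_val_ne : 2 * x.val ≠ n := fun h =>
    hx (by simpa using congrArg (Nat.cast : ℕ → ZMod n) h)
  rcases le_or_gt x.val ((n - 1) / 2) with h_le | h_gt
  · exact ⟨x.val, by omega, h_le, Or.inl (ZMod.natCast_zmod_val x)⟩
  · exact ⟨n - x.val, by omega, by omega, Or.inr (by simp [Nat.cast_sub val_lt.le])⟩

lemma forall_natCast_le_half_iff [NeZero n] {P : ZMod n → Prop} (hP : ∀ x, P (-x) ↔ P x) :
    (∀ h : ℕ, 1 ≤ h → h ≤ (n - 1) / 2 → P h) ↔ ∀ x, 2 * x ≠ 0 → P x := by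
  refine ⟨fun H x hx => ?_, fun H h h_pos h_le => H h (two_mul_natCast_zmod_ne_zero h_pos h_le)⟩
  obtain ⟨h, h_pos, h_le, rfl | rfl⟩ := exists_natCast_le_half_eq_or_neg_eq hx
  · exact H h h_pos h_le
  · exact (hP h).2 (H h h_pos h_le)

lemma image_natCast_range_eq_univ [NeZero n] :
    (fun k : ℕ => (k : ZMod n)) '' Finset.range n = Set.univ :=
  Set.eq_univ_of_forall fun k => ⟨k.val, by simpa using k.val_lt, ZMod.natCast_zmod_val k⟩

lemma exists_lt_half_two_mul_eq [NeZero n] (hn : Even n) (k : ZMod n) :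
    ∃ j < n / 2, 2 * (j : ZMod n) = 2 * k := by
  have half_pos : 0 < n / 2 := Nat.div_pos (Nat.le_of_dvd (NeZero.pos n) hn.two_dvd) two_pos
  refine ⟨k.val % (n / 2), Nat.mod_lt _ half_pos, ?_⟩
  calc 2 * ((k.val % (n / 2) : ℕ) : ZMod n)
    _ = ((2 * (k.val % (n / 2)) : ℕ) : ZMod n) := by push_cast; rfl
    _ = ((2 * k.val % n : ℕ) : ZMod n) := by
      rw [← Nat.mul_mod_mul_left, Nat.two_mul_div_two_of_even hn]
    _ = 2 * k := by simp

lemma image_two_mul_range_half_eq_even [NeZero n] (hn : Even n) :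
    (fun k : ℕ => ((2 * k : ℕ) : ZMod n)) '' Finset.range (n / 2) = {k | Even k} := by
  ext k
  simp only [Set.mem_image, Finset.mem_coe, Finset.mem_range, Nat.cast_mul, Nat.cast_ofNat,
    Set.mem_ofPred_eq, even_iff_exists_two_mul]
  constructor
  · rintro ⟨j, -, rfl⟩
    exact ⟨j, rfl⟩
  · rintro ⟨l, rfl⟩
    exact exists_lt_half_two_mul_eq hn l

lemma image_two_mul_add_one_range_half_eq_odd [NeZero n] (hn : Even n) :
    (fun k : ℕ => ((2 * k + 1 : ℕ) : ZMod n)) '' Finset.range (n / 2) = {k | Odd k} := by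
  ext k
  simp only [Set.mem_image, Finset.mem_coe, Finset.mem_range, Nat.cast_add, Nat.cast_mul,
    Nat.cast_ofNat, Nat.cast_one, Set.mem_ofPred_eq]
  constructor
  · rintro ⟨j, -, rfl⟩
    exact ⟨j, rfl⟩
  · rintro ⟨l, rfl⟩
    obtain ⟨j, j_lt, hj⟩ := exists_lt_half_two_mul_eq hn l
    exact ⟨j, j_lt, by rw [hj]⟩

lemma even_of_odd_charP {R : Type*} [Ring R] (p : ℕ) [CharP R p] (hp : Odd p) (x : R) :
    Even x := by
  obtain ⟨m, rfl⟩ := hp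
  have two_mul_add_one : (2 * m + 1 : R) = 0 := by exact_mod_cast CharP.cast_eq_zero R (2 * m + 1)
  refine even_iff_exists_two_mul.2 ⟨-(m * x), ?_⟩
  rw [mul_neg, ← mul_assoc, eq_neg_iff_add_eq_zero, add_comm, ← add_one_mul, two_mul_add_one,
    zero_mul]

lemma odd_of_odd_charP {R : Type*} [Ring R] (p : ℕ) [CharP R p] (hp : Odd p) (x : R) : Odd x := by
  simpa using (even_of_odd_charP p hp (x - 1)).add_one

lemma even_or_odd_zmod (k : ZMod n) : Even k ∨ Odd k := by
  obtain ⟨z, rfl⟩ := ZMod.intCast_surjective k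
  exact (Int.even_or_odd z).imp (fun h => h.map (Int.castRingHom _))
    (fun h => h.map (Int.castRingHom _))

end Residues

section PeriodTwo

variable {n : ℕ}

lemma periodic_indicator_one_iff {G M : Type*} [Add G] [MulZeroOneClass M] [NeZero (1 : M)]
    {S : Set G} {a : G} :
    Function.Periodic (S.indicator (1 : G → M)) a ↔ Function.Periodic (· ∈ S) a := by
  refine forall_congr' fun k => ?_
  by_cases h : k ∈ S <;> by_cases h' : k + a ∈ S <;> simp [h, h']

lemma periodic_two_apply_of_even {α : Type*} {f : ZMod n → α} (hf : Function.Periodic f 2)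
    {k : ZMod n} (hk : Even k) : f k = f 0 := by
  obtain ⟨l, rfl⟩ := even_iff_exists_two_mul.1 hk
  obtain ⟨z, rfl⟩ := ZMod.intCast_surjective l
  rw [mul_comm, hf.int_mul_eq]

lemma periodic_two_apply_of_odd {α : Type*} {f : ZMod n → α} (hf : Function.Periodic f 2)
    {k : ZMod n} (hk : Odd k) : f k = f 1 := by
  obtain ⟨l, rfl⟩ := hk
  obtain ⟨z, rfl⟩ := ZMod.intCast_surjective l
  rw [mul_comm, add_comm, hf.int_mul]

lemma periodic_even {R : Type*} [Ring R] : Function.Periodic (Even : R → Prop) 2 := fun x =>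
  propext ⟨fun h => by simpa using h.sub even_two, fun h => h.add even_two⟩

lemma periodic_odd {R : Type*} [Ring R] : Function.Periodic (Odd : R → Prop) 2 := fun x =>
  propext ⟨fun h => by simpa using h.sub_even even_two, fun h => h.add_even even_two⟩

lemma eq_empty_or_univ_or_even_or_odd_of_periodic_two {S : Set (ZMod n)}
    (hS : Function.Periodic (· ∈ S) 2) :
    S = ∅ ∨ S = Set.univ ∨ S = {k | Even k} ∨ S = {k | Odd k} := by
  have mem_of_even {k : ZMod n} (hk : Even k) : k ∈ S ↔ 0 ∈ S :=
    iff_of_eq (periodic_two_apply_of_even hS hk)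
  have mem_of_odd {k : ZMod n} (hk : Odd k) : k ∈ S ↔ 1 ∈ S :=
    iff_of_eq (periodic_two_apply_of_odd hS hk)
  by_cases h0 : 0 ∈ S <;> by_cases h1 : 1 ∈ S
  · refine Or.inr (Or.inl (Set.eq_univ_of_forall fun k => ?_))
    exact (even_or_odd_zmod k).elim (fun hk => (mem_of_even hk).2 h0) fun hk => (mem_of_odd hk).2 h1
  · refine Or.inr (Or.inr (Or.inl (Set.ext fun k => ⟨fun hkS => ?_, fun hk => ?_⟩)))
    · exact (even_or_odd_zmod k).resolve_right fun hk => h1 ((mem_of_odd hk).1 hkS)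
    · exact (mem_of_even hk).2 h0
  · refine Or.inr (Or.inr (Or.inr (Set.ext fun k => ⟨fun hkS => ?_, fun hk => ?_⟩)))
    · exact (even_or_odd_zmod k).resolve_left fun hk => h0 ((mem_of_even hk).1 hkS)
    · exact (mem_of_odd hk).2 h1
  · refine Or.inl (Set.eq_empty_of_forall_notMem fun k hkS => ?_)
    exact (even_or_odd_zmod k).elim (fun hk => h0 ((mem_of_even hk).1 hkS))
      fun hk => h1 ((mem_of_odd hk).1 hkS)

lemma periodic_two_iff {S : Set (ZMod n)} :
    Function.Periodic (· ∈ S) 2 ↔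
      S = ∅ ∨ S = Set.univ ∨ S = {k | Even k} ∨ S = {k | Odd k} := by
  refine ⟨eq_empty_or_univ_or_even_or_odd_of_periodic_two, ?_⟩
  rintro (rfl | rfl | rfl | rfl)
  · exact fun _ => rfl
  · exact fun _ => rfl
  · exact periodic_even
  · exact periodic_odd

lemma periodic_two_iff_of_odd (hn : Odd n) {S : Set (ZMod n)} :
    Function.Periodic (· ∈ S) 2 ↔ S = ∅ ∨ S = Set.univ := by
  have even_eq_univ : {k : ZMod n | Even k} = Set.univ :=
    Set.eq_univ_of_forall (even_of_odd_charP n hn)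
  have odd_eq_univ : {k : ZMod n | Odd k} = Set.univ :=
    Set.eq_univ_of_forall (odd_of_odd_charP n hn)
  rw [periodic_two_iff, even_eq_univ, odd_eq_univ, or_self, or_self]

end PeriodTwo

section Rotations

open scoped ZMod ComplexConjugate

variable {n : ℕ}

/-- The set `{k : a^k ∈ C}` of exponents of the rotations in `C`, as a subset of `ℤ/n`. It carries
the whole information on a set of rotations, and turns `η_h` into a Fourier coefficient. -/
def exponents (C : Finset (DihedralGroup n)) : Set (ZMod n) := DihedralGroup.r ⁻¹' C

lemma eq_iff_exponents_eq {C D : Finset (DihedralGroup n)}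
    (hC : (C : Set (DihedralGroup n)) ⊆ Set.range DihedralGroup.r)
    (hD : (D : Set (DihedralGroup n)) ⊆ Set.range DihedralGroup.r) :
    C = D ↔ exponents C = exponents D := by
  rw [exponents, exponents, Set.preimage_eq_preimage' hC hD, Finset.coe_inj]

lemma eq_empty_iff_exponents {C : Finset (DihedralGroup n)}
    (hC : (C : Set (DihedralGroup n)) ⊆ Set.range DihedralGroup.r) :
    C = ∅ ↔ exponents C = ∅ := by
  rw [eq_iff_exponents_eq hC (by simp)]
  simp [exponents]

lemma eq_image_r_iff_exponents {ι : Type*} {C : Finset (DihedralGroup n)}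
    (hC : (C : Set (DihedralGroup n)) ⊆ Set.range DihedralGroup.r) (s : Finset ι)
    (g : ι → ZMod n) :
    C = s.image (fun i => DihedralGroup.r (g i)) ↔ exponents C = g '' s := by
  have exponents_image : exponents (s.image fun i => DihedralGroup.r (g i)) = g '' s := by
    ext k
    simp [exponents]
  rw [eq_iff_exponents_eq hC (by simp [Set.subset_def]), exponents_image]

variable [NeZero n]

lemma omega_pow_eq_stdAddChar (m : ℕ) : omega n ^ m = ZMod.stdAddChar (m : ZMod n) := by
  rw [← Int.cast_natCast m, ZMod.stdAddChar_coe, omega, ← Complex.exp_nat_mul]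
  push_cast
  ring_nf

lemma eta_eq_dft (h : ℕ) (C : Finset (DihedralGroup n)) :
    eta n h C = 𝓕 ((exponents C).indicator (1 : ZMod n → ℂ)) (-h) := by
  rw [ZMod.dft_apply, ← sum_range_natCast_zmod, eta]
  refine Finset.sum_congr rfl fun k _ => ?_
  rw [omega_pow_eq_stdAddChar, mul_neg, neg_neg, Nat.cast_mul, mul_comm]
  by_cases hk : DihedralGroup.r (k : ZMod n) ∈ C <;> simp [exponents, hk]

lemma forall_eta_eq_zero_iff (C : Finset (DihedralGroup n)) :
    (∀ h : ℕ, 1 ≤ h → h ≤ (n - 1) / 2 → eta n h C = 0) ↔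
      Function.Periodic (· ∈ exponents C) 2 := by
  have conj_indicator (k : ZMod n) :
      conj ((exponents C).indicator (1 : ZMod n → ℂ) k) = (exponents C).indicator 1 k := by
    by_cases hk : k ∈ exponents C <;> simp [hk]
  have dft_neg_iff := dft_neg_eq_zero_iff conj_indicator
  simp only [eta_eq_dft, dft_neg_iff]
  rw [← periodic_indicator_one_iff (M := ℂ), periodic_iff_dft_eq_zero]
  exact forall_natCast_le_half_iff
    (P := fun x => 𝓕 ((exponents C).indicator (1 : ZMod n → ℂ)) x = 0) dft_neg_iff

end Rotations

theorem stmt_0 (n : ℕ) [NeZero n] (hn : 2 ≤ n)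
    (C : Finset (DihedralGroup n))
    (hC : ∀ x ∈ C, ∃ k : ZMod n, x = DihedralGroup.r k) :
    (∀ h : ℕ, 1 ≤ h → h ≤ (n - 1) / 2 → eta n h C = 0) ↔
      ((Odd n →
          C = ∅ ∨ C = (Finset.range n).image fun k : ℕ => DihedralGroup.r (k : ZMod n)) ∧
       (Even n →
          C = ∅ ∨
          C = ((Finset.range n).image fun k : ℕ => DihedralGroup.r (k : ZMod n)) ∨
          C = ((Finset.range (n / 2)).image fun k : ℕ => DihedralGroup.r ((2 * k : ℕ) : ZMod n)) ∨
          C = ((Finset.range (n / 2)).image fun k : ℕ =>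
                DihedralGroup.r ((2 * k + 1 : ℕ) : ZMod n)))) := by
  have C_subset_range : (C : Set (DihedralGroup n)) ⊆ Set.range DihedralGroup.r :=
    fun x hx => (hC x hx).imp fun _ => Eq.symm
  rw [forall_eta_eq_zero_iff]
  simp only [eq_empty_iff_exponents C_subset_range, eq_image_r_iff_exponents C_subset_range,
    image_natCast_range_eq_univ]
  rcases Nat.even_or_odd n with hn_even | hn_odd
  · rw [image_two_mul_range_half_eq_even hn_even, image_two_mul_add_one_range_half_eq_odd hn_even,
      periodic_two_iff]
    simp only [hn_even, Nat.not_odd_iff_even.2 hn_even, false_imp_iff, true_imp_iff, true_and]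
  · rw [periodic_two_iff_of_odd hn_odd]
    simp only [hn_odd, Nat.not_even_iff_odd.2 hn_odd, false_imp_iff, true_imp_iff, and_true]

end PaperPST
end
end

section
/- Let Cay(D_n, S) be a Cayley graph over the dihedral group D_n (n ≥ 2) and let h be an integer with 1 ≤ h ≤ ⌊(n−1)/2⌋ such that η_h(S_2) = 0. Then each of the following four vectors is an eigenvector of the adjacency matrix A with eigenvalue η_h(S_1): (1) the vector with entry ω^{hk} at vertex a^k (0 ≤ k ≤ n−1) and entry 0 at every vertex b a^k; (2) the vector with entry 0 at every a^k and entry ω^{hk} at b a^k; (3) the vector with entry 0 at every a^k and entry ω^{−hk} at b a^k; (4) the vector with entry ω^{−hk} at a^k and entry 0 at every b a^k. -/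
/-!
The adjacency matrix acts by `(A v) x = ∑ s ∈ S, v (s⁻¹ * x)`. For a character `ψ` of `ZMod n`, the
two copies of `ψ`, on the rotations `a^k` and on the reflections `b a^k`, therefore span an
`A`-invariant plane: the diagonal entries of `A` on it are the sums of `ψ⁻¹` and `ψ` over `S_1`, and
the off-diagonal entries are the sums of `ψ⁻¹` and `ψ` over `S_2`. The diagonal entries agree since
`S_1 = S_1⁻¹`. The set `S_2` need not be symmetric, but its two sums are complex conjugates, so they
vanish together, and then `A` acts on the plane as a scalar. Taking `ψ` to be `k ↦ ω^{hk}` and its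
inverse gives the four vectors.
-/

open Polynomial Matrix

noncomputable section

namespace PaperPST

section

open DihedralGroup

section AddChar

variable {G R : Type*} [AddCommGroup G]

lemma sum_inv_addChar_of_neg_mem [CommSemiring R] (ψ : AddChar G R) {T : Finset G}
    (hT : ∀ k ∈ T, -k ∈ T) : ∑ k ∈ T, ψ⁻¹ k = ∑ k ∈ T, ψ k :=
  Finset.sum_nbij' (-·) (-·) hT hT (by simp) (by simp) fun k _ => AddChar.inv_apply ψ k

lemma sum_inv_addChar_eq_conj [Finite G] [RCLike R] (ψ : AddChar G R) (T : Finset G) :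
    ∑ k ∈ T, ψ⁻¹ k = starRingEnd R (∑ k ∈ T, ψ k) := by
  simp only [map_sum, AddChar.inv_apply, AddChar.map_neg_eq_conj]

end AddChar

lemma adjG_mulVec_apply {Γ : Type*} [Group Γ] [Fintype Γ] [DecidableEq Γ] (S : Finset Γ)
    (v : Γ → ℂ) (x : Γ) : (adjG Γ S *ᵥ v) x = ∑ s ∈ S, v (s⁻¹ * x) := by
  calc (adjG Γ S *ᵥ v) x = ∑ y, if x * y⁻¹ ∈ S then v y else 0 := by
        simp only [mulVec, dotProduct, adjG, of_apply, ite_mul, one_mul, zero_mul]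
    _ = ∑ s, if s ∈ S then v (s⁻¹ * x) else 0 :=
        Fintype.sum_equiv (Equiv.divLeft x) _ _ fun y => by simp [div_eq_mul_inv]
    _ = ∑ s ∈ S, v (s⁻¹ * x) := by simp

variable {n : ℕ}

section Vectors

variable {R : Type*} [Zero R]

/-- The copy of `f` on the rotations: value `f k` at `a^k` and `0` at every reflection. -/
def rotVec (f : ZMod n → R) : DihedralGroup n → R
  | .r k => f k
  | .sr _ => 0

/-- The copy of `f` on the reflections: value `f k` at `b a^k` and `0` at every rotation. -/
def reflVec (f : ZMod n → R) : DihedralGroup n → R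
  | .r _ => 0
  | .sr k => f k

lemma rotVec_ne_zero {f : ZMod n → R} (hf : f ≠ 0) : rotVec f ≠ 0 :=
  fun h => hf <| funext fun k => congrFun h (r k)

lemma reflVec_ne_zero {f : ZMod n → R} (hf : f ≠ 0) : reflVec f ≠ 0 :=
  fun h => hf <| funext fun k => congrFun h (sr k)

end Vectors

variable [NeZero n]

/-- The exponents `k` with `a^k ∈ S`: the set `S_1`, read inside `ZMod n`. -/
def rotExponents (S : Finset (DihedralGroup n)) : Finset (ZMod n) :=
  {k | r k ∈ S}

/-- The exponents `k` with `b a^k ∈ S`: the set `S_2`, read inside `ZMod n`. -/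
def reflExponents (S : Finset (DihedralGroup n)) : Finset (ZMod n) :=
  {k | sr k ∈ S}

lemma mem_rotExponents {S : Finset (DihedralGroup n)} {k : ZMod n} :
    k ∈ rotExponents S ↔ r k ∈ S := by
  simp [rotExponents]

lemma mem_reflExponents {S : Finset (DihedralGroup n)} {k : ZMod n} :
    k ∈ reflExponents S ↔ sr k ∈ S := by
  simp [reflExponents]

lemma rotExponents_S1 (S : Finset (DihedralGroup n)) :
    rotExponents (S1 n S) = rotExponents S := by
  ext k
  rw [mem_rotExponents, mem_rotExponents, S1, Finset.mem_filter]
  exact and_iff_left rfl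

lemma rotExponents_S2 (S : Finset (DihedralGroup n)) :
    rotExponents (S2 n S) = reflExponents S := by
  ext k
  rw [mem_rotExponents, mem_reflExponents, S2, Finset.mem_filter, Finset.mem_image]
  refine ⟨fun ⟨⟨s, hs, hsk⟩, _⟩ => ?_, fun hk => ⟨⟨sr k, hk, by simp⟩, rfl⟩⟩
  have s_eq : s = sr k := by simpa using eq_inv_mul_of_mul_eq hsk
  exact s_eq ▸ hs

lemma neg_mem_rotExponents {S : Finset (DihedralGroup n)} (hS : ∀ s ∈ S, s⁻¹ ∈ S) :
    ∀ k ∈ rotExponents S, -k ∈ rotExponents S := by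
  simp only [mem_rotExponents, ← inv_r]
  exact fun k => hS (r k)

lemma sum_eq_sum_rotExponents_add_sum_reflExponents {M : Type*} [AddCommMonoid M]
    (S : Finset (DihedralGroup n)) (f : DihedralGroup n → M) :
    ∑ s ∈ S, f s = ∑ k ∈ rotExponents S, f (r k) + ∑ k ∈ reflExponents S, f (sr k) := by
  calc ∑ s ∈ S, f s = ∑ s, if s ∈ S then f s else 0 := by simp
    _ = ∑ k, (if r k ∈ S then f (r k) else 0) + ∑ k, (if sr k ∈ S then f (sr k) else 0) := by
        rw [← equivSum.symm.sum_comp, Fintype.sum_sum_type]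
        rfl
    _ = ∑ k ∈ rotExponents S, f (r k) + ∑ k ∈ reflExponents S, f (sr k) := by
        simp only [rotExponents, reflExponents, Finset.sum_filter]

lemma adjC_eq_adjG (S : Finset (DihedralGroup n)) : adjC n S = adjG (DihedralGroup n) S := rfl

lemma adjC_mulVec_apply (S : Finset (DihedralGroup n)) (v : DihedralGroup n → ℂ)
    (x : DihedralGroup n) :
    (adjC n S *ᵥ v) x =
      ∑ k ∈ rotExponents S, v (r (-k) * x) + ∑ k ∈ reflExponents S, v (sr k * x) := by
  simp only [adjC_eq_adjG, adjG_mulVec_apply, sum_eq_sum_rotExponents_add_sum_reflExponents,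
    inv_r, inv_sr]

lemma adjC_mulVec_rotVec (S : Finset (DihedralGroup n)) (ψ : AddChar (ZMod n) ℂ) :
    adjC n S *ᵥ rotVec ψ =
      (∑ k ∈ rotExponents S, ψ⁻¹ k) • rotVec ψ + (∑ k ∈ reflExponents S, ψ⁻¹ k) • reflVec ψ := by
  ext (i | i) <;>
    simp [adjC_mulVec_apply, rotVec, reflVec, sub_eq_neg_add, AddChar.map_add_eq_mul,
      Finset.sum_mul, AddChar.inv_apply]

lemma adjC_mulVec_reflVec (S : Finset (DihedralGroup n)) (ψ : AddChar (ZMod n) ℂ) :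
    adjC n S *ᵥ reflVec ψ =
      (∑ k ∈ rotExponents S, ψ k) • reflVec ψ + (∑ k ∈ reflExponents S, ψ k) • rotVec ψ := by
  ext (i | i) <;>
    simp [adjC_mulVec_apply, rotVec, reflVec, AddChar.map_add_eq_mul, Finset.mul_sum, mul_comm]

section Eigenvectors

variable {S : Finset (DihedralGroup n)} {ψ : AddChar (ZMod n) ℂ}

lemma adjC_mulVec_rotVec_of_sum_eq_zero (hS : ∀ s ∈ S, s⁻¹ ∈ S)
    (hψ : ∑ k ∈ reflExponents S, ψ k = 0) :
    adjC n S *ᵥ rotVec ψ = (∑ k ∈ rotExponents S, ψ k) • rotVec ψ := by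
  rw [adjC_mulVec_rotVec, sum_inv_addChar_of_neg_mem ψ (neg_mem_rotExponents hS),
    sum_inv_addChar_eq_conj, hψ, map_zero, zero_smul, add_zero]

lemma adjC_mulVec_reflVec_of_sum_eq_zero (hψ : ∑ k ∈ reflExponents S, ψ k = 0) :
    adjC n S *ᵥ reflVec ψ = (∑ k ∈ rotExponents S, ψ k) • reflVec ψ := by
  rw [adjC_mulVec_reflVec, hψ, zero_smul, add_zero]

end Eigenvectors

variable (n) in
lemma omega_pow_self : omega n ^ n = 1 :=
  (Complex.isPrimitiveRoot_exp n (NeZero.ne n)).pow_eq_one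

variable (n) in
/-- The character `k ↦ ω^{hk}` of `ZMod n`. Its values are the entries of `uv1 n h` and `uv2 n h`,
those of its inverse the entries of `uv3 n h` and `uv4 n h`. -/
def omegaChar (h : ℕ) : AddChar (ZMod n) ℂ :=
  AddChar.zmodChar n (ζ := omega n ^ h) (by rw [pow_right_comm, omega_pow_self, one_pow])

lemma omegaChar_apply (h : ℕ) (k : ZMod n) : omegaChar n h k = omega n ^ (h * k.val) := by
  rw [omegaChar, AddChar.zmodChar_apply, pow_mul]

lemma omegaChar_inv_apply (h : ℕ) (k : ZMod n) :
    (omegaChar n h)⁻¹ k = (omega n)⁻¹ ^ (h * k.val) := by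
  rw [AddChar.inv_apply', omegaChar_apply, inv_pow]

lemma eta_eq_sum_omegaChar (h : ℕ) (C : Finset (DihedralGroup n)) :
    eta n h C = ∑ k ∈ rotExponents C, omegaChar n h k := by
  rw [rotExponents, Finset.sum_filter, eta]
  refine Finset.sum_nbij' (fun k : ℕ => (k : ZMod n)) ZMod.val (by simp)
    (by simp [ZMod.val_lt]) (fun k hk => ZMod.val_cast_of_lt (Finset.mem_range.mp hk)) (by simp)
    fun k hk => ?_
  rw [omegaChar_apply, ZMod.val_cast_of_lt (Finset.mem_range.mp hk)]

lemma uv1_eq_rotVec (h : ℕ) : uv1 n h = rotVec (omegaChar n h) := by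
  ext (_ | _) <;> simp [uv1, rotVec, omegaChar_apply]

lemma uv2_eq_reflVec (h : ℕ) : uv2 n h = reflVec (omegaChar n h) := by
  ext (_ | _) <;> simp [uv2, reflVec, omegaChar_apply]

lemma uv3_eq_reflVec (h : ℕ) : uv3 n h = reflVec ⇑(omegaChar n h)⁻¹ := by
  ext (_ | _) <;> simp only [uv3, reflVec, omegaChar_inv_apply]

lemma uv4_eq_rotVec (h : ℕ) : uv4 n h = rotVec ⇑(omegaChar n h)⁻¹ := by
  ext (_ | _) <;> simp only [uv4, rotVec, omegaChar_inv_apply]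

end

theorem stmt_2_general (n : ℕ) [NeZero n] (S : Finset (DihedralGroup n))
    (hSinv : ∀ s ∈ S, s⁻¹ ∈ S) (h : ℕ) (hzero : eta n h (S2 n S) = 0) :
    (adjC n S *ᵥ uv1 n h = eta n h (S1 n S) • uv1 n h ∧ uv1 n h ≠ 0) ∧
    (adjC n S *ᵥ uv2 n h = eta n h (S1 n S) • uv2 n h ∧ uv2 n h ≠ 0) ∧
    (adjC n S *ᵥ uv3 n h = eta n h (S1 n S) • uv3 n h ∧ uv3 n h ≠ 0) ∧
    (adjC n S *ᵥ uv4 n h = eta n h (S1 n S) • uv4 n h ∧ uv4 n h ≠ 0) := by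
  rw [uv1_eq_rotVec, uv2_eq_reflVec, uv3_eq_reflVec, uv4_eq_rotVec]
  set χ := omegaChar n h
  have eta_S1 : eta n h (S1 n S) = ∑ k ∈ rotExponents S, χ k := by
    rw [eta_eq_sum_omegaChar, rotExponents_S1]
  have eta_S1_inv : eta n h (S1 n S) = ∑ k ∈ rotExponents S, χ⁻¹ k := by
    rw [eta_S1, sum_inv_addChar_of_neg_mem χ (neg_mem_rotExponents hSinv)]
  have sum_refl : ∑ k ∈ reflExponents S, χ k = 0 := by
    rw [← rotExponents_S2, ← eta_eq_sum_omegaChar, hzero]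
  have sum_refl_inv : ∑ k ∈ reflExponents S, χ⁻¹ k = 0 := by
    rw [sum_inv_addChar_eq_conj, sum_refl, map_zero]
  refine ⟨⟨?_, rotVec_ne_zero χ.coe_ne_zero⟩, ⟨?_, reflVec_ne_zero χ.coe_ne_zero⟩,
    ⟨?_, reflVec_ne_zero χ⁻¹.coe_ne_zero⟩, ⟨?_, rotVec_ne_zero χ⁻¹.coe_ne_zero⟩⟩
  · rw [eta_S1, adjC_mulVec_rotVec_of_sum_eq_zero hSinv sum_refl]
  · rw [eta_S1, adjC_mulVec_reflVec_of_sum_eq_zero sum_refl]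
  · rw [eta_S1_inv, adjC_mulVec_reflVec_of_sum_eq_zero sum_refl_inv]
  · rw [eta_S1_inv, adjC_mulVec_rotVec_of_sum_eq_zero hSinv sum_refl_inv]

theorem stmt_2 (n : ℕ) [NeZero n] (hn : 2 ≤ n)
    (S : Finset (DihedralGroup n)) (hS1 : (1 : DihedralGroup n) ∉ S)
    (hSinv : ∀ s ∈ S, s⁻¹ ∈ S) (hSne : S.Nonempty)
    (h : ℕ) (hh1 : 1 ≤ h) (hh2 : h ≤ (n - 1) / 2) (hzero : eta n h (S2 n S) = 0) :
    (adjC n S *ᵥ uv1 n h = eta n h (S1 n S) • uv1 n h ∧ uv1 n h ≠ 0) ∧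
    (adjC n S *ᵥ uv2 n h = eta n h (S1 n S) • uv2 n h ∧ uv2 n h ≠ 0) ∧
    (adjC n S *ᵥ uv3 n h = eta n h (S1 n S) • uv3 n h ∧ uv3 n h ≠ 0) ∧
    (adjC n S *ᵥ uv4 n h = eta n h (S1 n S) • uv4 n h ∧ uv4 n h ≠ 0) :=
  stmt_2_general n S hSinv h hzero

end PaperPST
end
end

section
/- Let G = Cay(Γ, S) be a Cayley graph over a finite group Γ. Then there exist distinct vertices u, v of G such that PST occurs between u and v at time τ if and only if T_τ(P) is the permutation matrix of a fixed-point-free involution of Γ, i.e., there exists a bijection σ : Γ → Γ with σ ∘ σ = id and σ(g) ≠ g for all g ∈ Γ, such that T_τ(P)_{x,y} = 1 if x = σ(y) and T_τ(P)_{x,y} = 0 otherwise. -/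
/-!
A polynomial `M` in the discriminant matrix `P`, such as `T_τ(P)`, inherits from `P` both its
symmetry and its invariance under the right translations of `Γ`. Invariance turns one transfer
`M e_u = e_v` into the transfers `M e_y = e_{ay}` with `a = v u⁻¹`, for all `y`, so `M` is the
permutation matrix of left multiplication by `a`. Symmetry of `M` makes this permutation an
involution, and it has no fixed point because `a ≠ 1`.
-/

open Polynomial Matrix

noncomputable section

namespace PaperPST

section Transfer

variable {ι R : Type*} [Fintype ι] [DecidableEq ι] [NonAssocSemiring R] {M : Matrix ι ι R}

lemma mulVec_single_one_eq_single_one_iff {u v : ι} :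
    M *ᵥ Pi.single u 1 = Pi.single v 1 ↔ ∀ x, M x u = if x = v then 1 else 0 := by
  simp only [mulVec_single_one, funext_iff, col_apply, Pi.single_apply]

lemma eq_of_isSymm_of_mulVec_single_one [Nontrivial R] (hM : M.IsSymm) {u v w : ι}
    (huv : M *ᵥ Pi.single u 1 = Pi.single v 1) (hvw : M *ᵥ Pi.single v 1 = Pi.single w 1) :
    w = u := by
  rw [mulVec_single_one_eq_single_one_iff] at huv hvw
  have entry_eq_one : M u v = 1 := by rw [hM.apply, huv, if_pos rfl]
  by_contra hwu
  rw [hvw, if_neg (Ne.symm hwu)] at entry_eq_one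
  exact zero_ne_one entry_eq_one

end Transfer

section Aeval

variable {ι κ R A : Type*} [Fintype ι] [DecidableEq ι] [Fintype κ] [DecidableEq κ] [CommSemiring R]

lemma submatrix_aeval [Semiring A] [Algebra R A] (M : Matrix ι ι A) (p : R[X]) (e : κ ≃ ι) :
    (aeval M p).submatrix e e = aeval (M.submatrix e e) p :=
  (aeval_algHom_apply (reindexAlgEquiv R A e.symm) M p).symm

variable [CommSemiring A] [Algebra R A]

lemma transpose_aeval (M : Matrix ι ι A) (p : R[X]) : (aeval M p)ᵀ = aeval Mᵀ p := by
  have h := aeval_algHom_apply (transposeAlgEquiv ι R A) M p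
  simp only [transposeAlgEquiv_apply, aeval_op_apply] at h
  exact (MulOpposite.op_injective h).symm

lemma isSymm_aeval {M : Matrix ι ι A} (hM : M.IsSymm) (p : R[X]) : (aeval M p).IsSymm := by
  rw [IsSymm, transpose_aeval, hM.eq]

end Aeval

/-- Invariance of a matrix indexed by `Γ` under the simultaneous right translation of its row and
column indices; for the matrix of a graph on `Γ`, it says that right translations are
automorphisms. -/
def IsMulRightInvariant {Γ R : Type*} [Mul Γ] (M : Matrix Γ Γ R) : Prop :=
  ∀ x y g : Γ, M (x * g) (y * g) = M x y

namespace IsMulRightInvariant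

variable {Γ R A : Type*} [Group Γ] [Fintype Γ] [DecidableEq Γ]

lemma aeval [CommSemiring R] [Semiring A] [Algebra R A] {M : Matrix Γ Γ A}
    (hM : IsMulRightInvariant M) (p : R[X]) : IsMulRightInvariant (Polynomial.aeval M p) := by
  intro x y g
  have submatrix_eq : M.submatrix (Equiv.mulRight g) (Equiv.mulRight g) = M :=
    Matrix.ext fun a b => hM a b g
  have h := submatrix_aeval M p (Equiv.mulRight g)
  rw [submatrix_eq] at h
  exact congrFun₂ h x y

lemma mulVec_single_one_mul [NonAssocSemiring R] {M : Matrix Γ Γ R} (hM : IsMulRightInvariant M)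
    {u v : Γ} (h : M *ᵥ Pi.single u 1 = Pi.single v 1) (g : Γ) :
    M *ᵥ Pi.single (u * g) 1 = Pi.single (v * g) 1 := by
  rw [mulVec_single_one_eq_single_one_iff] at h ⊢
  intro x
  calc M x (u * g) = M (x * g⁻¹) u := by rw [← hM (x * g⁻¹) u g, inv_mul_cancel_right]
    _ = if x = v * g then 1 else 0 := by simp only [h, mul_inv_eq_iff_eq_mul]

end IsMulRightInvariant

section Cayley

variable {Γ : Type*} [Group Γ] [Fintype Γ] [DecidableEq Γ]

lemma isMulRightInvariant_discG (S : Finset Γ) : IsMulRightInvariant (discG Γ S) := by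
  intro x y g
  simp only [discG, adjG, Matrix.smul_apply, of_apply, _root_.mul_inv_rev, mul_assoc,
    mul_inv_cancel_left]

lemma isSymm_adjG {S : Finset Γ} (hS : ∀ s ∈ S, s⁻¹ ∈ S) : (adjG Γ S).IsSymm := by
  have inv_mem_of_mem (x y : Γ) (h : x * y⁻¹ ∈ S) : y * x⁻¹ ∈ S := by
    simpa only [_root_.mul_inv_rev, inv_inv] using hS _ h
  refine IsSymm.ext fun x y => ?_
  simp only [adjG, of_apply, Iff.intro (inv_mem_of_mem y x) (inv_mem_of_mem x y)]

lemma isMulRightInvariant_chebG (S : Finset Γ) (τ : ℕ) : IsMulRightInvariant (chebG Γ S τ) :=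
  (isMulRightInvariant_discG S).aeval _

lemma isSymm_chebG {S : Finset Γ} (hS : ∀ s ∈ S, s⁻¹ ∈ S) (τ : ℕ) : (chebG Γ S τ).IsSymm :=
  isSymm_aeval ((isSymm_adjG hS).smul _) _

end Cayley

theorem stmt_5_general {Γ R : Type*} [Group Γ] [Fintype Γ] [DecidableEq Γ] [NonAssocSemiring R]
    [Nontrivial R] {M : Matrix Γ Γ R} (hM : IsMulRightInvariant M) (hsymm : M.IsSymm) :
    (∃ u v : Γ, u ≠ v ∧ M *ᵥ Pi.single u 1 = Pi.single v 1) ↔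
      ∃ σ : Γ → Γ, Function.Bijective σ ∧ (∀ g : Γ, σ (σ g) = g) ∧ (∀ g : Γ, σ g ≠ g) ∧
        ∀ x y : Γ, M x y = if x = σ y then 1 else 0 := by
  constructor
  · rintro ⟨u, v, huv, h⟩
    have transfer (y : Γ) : M *ᵥ Pi.single y 1 = Pi.single (v * u⁻¹ * y) 1 := by
      simpa only [mul_inv_cancel_left, mul_assoc] using hM.mulVec_single_one_mul h (u⁻¹ * y)
    have involutive : Function.Involutive (v * u⁻¹ * ·) := fun y =>
      eq_of_isSymm_of_mulVec_single_one hsymm (transfer y) (transfer _)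
    have ne_self (y : Γ) : v * u⁻¹ * y ≠ y := by
      rw [Ne, mul_eq_right, mul_inv_eq_one]
      exact huv.symm
    exact ⟨_, involutive.bijective, involutive, ne_self,
      fun x y => mulVec_single_one_eq_single_one_iff.mp (transfer y) x⟩
  · rintro ⟨σ, -, -, ne_self, hσ⟩
    exact ⟨1, σ 1, (ne_self 1).symm,
      mulVec_single_one_eq_single_one_iff.mpr fun x => hσ x 1⟩

theorem stmt_5 (Γ : Type*) [Group Γ] [Fintype Γ] [DecidableEq Γ]
    (S : Finset Γ) (hS1 : (1 : Γ) ∉ S) (hSinv : ∀ s ∈ S, s⁻¹ ∈ S) (hSne : S.Nonempty)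
    (τ : ℕ) (hτ : 1 ≤ τ) :
    (∃ u v : Γ, u ≠ v ∧ PSTG Γ S τ u v) ↔
      ∃ σ : Γ → Γ, Function.Bijective σ ∧ (∀ g : Γ, σ (σ g) = g) ∧ (∀ g : Γ, σ g ≠ g) ∧
        ∀ x y : Γ, chebG Γ S τ x y = if x = σ y then 1 else 0 :=
  stmt_5_general (isMulRightInvariant_chebG S τ) (isSymm_chebG hSinv τ)

end PaperPST
end
end

section
/- Let G = Cay(Γ, S) be a normal Cayley graph over a finite group Γ, i.e., g s g^{-1} ∈ S for all g ∈ Γ and s ∈ S. If PST occurs between some pair of distinct vertices of G at time τ, then there exists an element z of the center Z(Γ) with z ≠ 1 and z² = 1 such that T_τ(P) = R_z, where R_z is the permutation matrix of right multiplication by z, i.e., (R_z)_{x,y} = 1 if x = yz and (R_z)_{x,y} = 0 otherwise. -/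
/-!
A Cayley matrix `P x y = f (x * y⁻¹)` is fixed by the simultaneous right translation of rows and
columns; it is fixed by left translations when `f` is a class function, and symmetric when
`f x⁻¹ = f x`. Reindexing and transposition commute with polynomial evaluation, so `M = p(P)` has
the same three symmetries. If column `u` of `M` is `e_v`, left translations determine every other
column and give `M = R_z` with `z = u⁻¹ * v`. Right translations fix `R_z` only if `z` is central,
and `R_z` is symmetric only if `z ^ 2 = 1`.
-/

open Polynomial Matrix

noncomputable section

namespace PaperPST

section PolynomialSymmetry

variable {m n R A : Type*} [Fintype m] [DecidableEq m] [Fintype n] [DecidableEq n]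
  [CommSemiring R]

theorem aeval_submatrix_equiv [Semiring A] [Algebra R A] (e : m ≃ n) (M : Matrix n n A)
    (p : R[X]) : aeval (M.submatrix e e) p = (aeval M p).submatrix e e :=
  aeval_algHom_apply (reindexAlgEquiv R A e.symm) M p

theorem aeval_transpose [CommSemiring A] [Algebra R A] (M : Matrix n n A) (p : R[X]) :
    aeval Mᵀ p = (aeval M p)ᵀ := by
  simp only [aeval_eq_sum_range, transpose_sum, transpose_smul, transpose_pow]

end PolynomialSymmetry

/-- The matrix `x, y ↦ f (x * y⁻¹)`, i.e. the adjacency matrix of the Cayley graph in which the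
connection element `s` carries the weight `f s`. -/
def cayleyMatrix {Γ R : Type*} [Group Γ] (f : Γ → R) : Matrix Γ Γ R :=
  Matrix.of fun x y => f (x * y⁻¹)

section CayleyMatrix

variable {Γ R : Type*} [Group Γ]

theorem cayleyMatrix_submatrix_mulRight (f : Γ → R) (g : Γ) :
    (cayleyMatrix f).submatrix (Equiv.mulRight g) (Equiv.mulRight g) = cayleyMatrix f := by
  ext x y
  simp [cayleyMatrix]

variable {f : Γ → R}

theorem cayleyMatrix_submatrix_mulLeft (hconj : ∀ g x, f (g * x * g⁻¹) = f x) (g : Γ) :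
    (cayleyMatrix f).submatrix (Equiv.mulLeft g) (Equiv.mulLeft g) = cayleyMatrix f := by
  ext x y
  simpa [cayleyMatrix, mul_assoc] using hconj g (x * y⁻¹)

theorem isSymm_cayleyMatrix (hinv : ∀ x, f x⁻¹ = f x) : (cayleyMatrix f).IsSymm :=
  IsSymm.ext fun x y => by simpa [cayleyMatrix] using hinv (x * y⁻¹)

end CayleyMatrix

/-- The permutation matrix `R_z` of right multiplication by `z`, with columns
`R_z e_y = e_{y * z}`. -/
def rightMulMatrix {Γ : Type*} (R : Type*) [Mul Γ] [DecidableEq Γ] [Zero R] [One R] (z : Γ) :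
    Matrix Γ Γ R :=
  Matrix.of fun x y => if x = y * z then 1 else 0

section RightMulMatrix

variable {Γ R : Type*} [DecidableEq Γ] [Zero R] [One R]

theorem rightMulMatrix_apply_eq_one_iff [Mul Γ] [NeZero (1 : R)] {x y z : Γ} :
    rightMulMatrix R z x y = 1 ↔ x = y * z := by
  simp [rightMulMatrix]

variable [Group Γ]

theorem eq_rightMulMatrix_of_submatrix_mulLeft {M : Matrix Γ Γ R} {u v : Γ}
    (hleft : ∀ g, M.submatrix (Equiv.mulLeft g) (Equiv.mulLeft g) = M)
    (hcol : M.col u = Pi.single v 1) : M = rightMulMatrix R (u⁻¹ * v) := by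
  ext x y
  calc M x y = M (u * y⁻¹ * x) (u * y⁻¹ * y) := (congrFun₂ (hleft (u * y⁻¹)) x y).symm
    _ = M.col u (u * y⁻¹ * x) := by rw [inv_mul_cancel_right, col_apply]
    _ = if u * y⁻¹ * x = v then 1 else 0 := by rw [hcol, Pi.single_apply]
    _ = rightMulMatrix R (u⁻¹ * v) x y := by
      simp only [rightMulMatrix, of_apply, mul_assoc, ← eq_inv_mul_iff_mul_eq, inv_inv]

variable [NeZero (1 : R)] {z : Γ}

theorem mem_center_of_rightMulMatrix_submatrix_mulRight
    (hright : ∀ g, (rightMulMatrix R z).submatrix (Equiv.mulRight g) (Equiv.mulRight g) =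
      rightMulMatrix R z) :
    z ∈ Subgroup.center Γ := by
  refine Subgroup.mem_center_iff.mpr fun g => ?_
  have hentry : rightMulMatrix R z (z * g) (1 * g) = 1 :=
    (congrFun₂ (hright g) z 1).trans (rightMulMatrix_apply_eq_one_iff.mpr (one_mul z).symm)
  simpa using (rightMulMatrix_apply_eq_one_iff.mp hentry).symm

theorem sq_eq_one_of_isSymm_rightMulMatrix (hsymm : (rightMulMatrix R z).IsSymm) :
    z ^ 2 = 1 := by
  have hentry : rightMulMatrix R z 1 z = 1 :=
    (hsymm.apply z 1).trans (rightMulMatrix_apply_eq_one_iff.mpr (one_mul z).symm)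
  rw [pow_two, ← rightMulMatrix_apply_eq_one_iff.mp hentry]

end RightMulMatrix

theorem stmt_6_general {Γ R : Type*} [Group Γ] [Fintype Γ] [DecidableEq Γ] [CommSemiring R]
    [Nontrivial R] {f : Γ → R} (hinv : ∀ x, f x⁻¹ = f x)
    (hconj : ∀ g x, f (g * x * g⁻¹) = f x) (p : R[X]) {u v : Γ} (huv : u ≠ v)
    (hpst : aeval (cayleyMatrix f) p *ᵥ Pi.single u 1 = Pi.single v 1) :
    ∃ z ∈ Subgroup.center Γ, z ≠ 1 ∧ z ^ 2 = 1 ∧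
      aeval (cayleyMatrix f) p = rightMulMatrix R z := by
  set M := aeval (cayleyMatrix f) p with hM
  have hleft (g : Γ) : M.submatrix (Equiv.mulLeft g) (Equiv.mulLeft g) = M := by
    rw [hM, ← aeval_submatrix_equiv, cayleyMatrix_submatrix_mulLeft hconj]
  have hright (g : Γ) : M.submatrix (Equiv.mulRight g) (Equiv.mulRight g) = M := by
    rw [hM, ← aeval_submatrix_equiv, cayleyMatrix_submatrix_mulRight]
  have hsymm : M.IsSymm := by
    rw [IsSymm, hM, ← aeval_transpose, isSymm_cayleyMatrix hinv]
  have hMz : M = rightMulMatrix R (u⁻¹ * v) :=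
    eq_rightMulMatrix_of_submatrix_mulLeft hleft (by rw [← mulVec_single_one, hpst])
  rw [hMz] at hright hsymm
  exact ⟨u⁻¹ * v, mem_center_of_rightMulMatrix_submatrix_mulRight hright,
    fun h => huv (inv_mul_eq_one.mp h), sq_eq_one_of_isSymm_rightMulMatrix hsymm, hMz⟩

section ConnectionSet

variable {Γ : Type*}

theorem inv_mem_iff_of_forall_inv_mem [InvolutiveInv Γ] {S : Finset Γ}
    (hinv : ∀ s ∈ S, s⁻¹ ∈ S) (x : Γ) : x⁻¹ ∈ S ↔ x ∈ S :=
  ⟨fun h => inv_inv x ▸ hinv _ h, hinv x⟩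

variable [Group Γ]

theorem conj_mem_iff_of_forall_conj_mem {S : Finset Γ}
    (hconj : ∀ g : Γ, ∀ s ∈ S, g * s * g⁻¹ ∈ S) (g x : Γ) : g * x * g⁻¹ ∈ S ↔ x ∈ S :=
  ⟨fun h => by simpa [mul_assoc] using hconj g⁻¹ _ h, hconj g x⟩

theorem discG_eq_cayleyMatrix [Fintype Γ] [DecidableEq Γ] (S : Finset Γ) :
    discG Γ S = cayleyMatrix fun x => if x ∈ S then (S.card : ℂ)⁻¹ else 0 := by
  ext x y
  simp [discG, adjG, cayleyMatrix]

end ConnectionSet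

theorem stmt_6 (Γ : Type*) [Group Γ] [Fintype Γ] [DecidableEq Γ]
    (S : Finset Γ) (hS1 : (1 : Γ) ∉ S) (hSinv : ∀ s ∈ S, s⁻¹ ∈ S) (hSne : S.Nonempty)
    (hnorm : ∀ g : Γ, ∀ s ∈ S, g * s * g⁻¹ ∈ S)
    (τ : ℕ) (hτ : 1 ≤ τ) (u v : Γ) (huv : u ≠ v) (hpst : PSTG Γ S τ u v) :
    ∃ z : Γ, z ∈ Subgroup.center Γ ∧ z ≠ 1 ∧ z ^ 2 = 1 ∧
      ∀ x y : Γ, chebG Γ S τ x y = if x = y * z then 1 else 0 := by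
  simp only [PSTG, chebG, discG_eq_cayleyMatrix] at hpst ⊢
  obtain ⟨z, hcenter, hne, hsq, hM⟩ := stmt_6_general
    (fun x => by simp only [inv_mem_iff_of_forall_inv_mem hSinv])
    (fun g x => by simp only [conj_mem_iff_of_forall_conj_mem hnorm]) _ huv hpst
  exact ⟨z, hcenter, hne, hsq, congrFun₂ hM⟩

end PaperPST
end
end

section
/- Let n ≥ 3 be odd and let Cay(D_n, S) be a normal Cayley graph over the dihedral group D_n. Then Cay(D_n, S) exhibits no perfect state transfer: for every positive integer τ and all distinct vertices u and v, T_τ(P) e_u ≠ e_v. -/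
/-!
`T_τ(P)` is a polynomial in `P`, so perfect state transfer is preserved by every automorphism of
the Cayley graph, and transfer from a given vertex determines its target. Right translations are
automorphisms, so transfer from `u` to `v` yields transfer from `1` to `v u⁻¹`. When `S` is closed
under conjugation, conjugations are automorphisms as well, and they fix `1`; hence they fix
`v u⁻¹`, which is therefore central. The centre of `D_n` is trivial for odd `n ≥ 3`.
-/

open Polynomial Matrix

noncomputable section

namespace PaperPST

section Matrix

variable {m n R A : Type*} [Fintype m] [Fintype n] [DecidableEq m] [DecidableEq n]

theorem reindex_aeval [CommSemiring R] [Semiring A] [Algebra R A] (e : m ≃ n)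
    (M : Matrix m m A) (p : R[X]) :
    reindex e e (aeval M p) = aeval (reindex e e M) p :=
  (aeval_algHom_apply (reindexAlgEquiv R A e) M p).symm

theorem reindex_mulVec_single_one [NonAssocSemiring R] {M : Matrix m m R} {i j : m}
    (h : M *ᵥ Pi.single i 1 = Pi.single j 1) (e : m ≃ n) :
    reindex e e M *ᵥ Pi.single (e i) 1 = Pi.single (e j) 1 := by
  ext k
  simpa [Pi.single_apply, Equiv.symm_apply_eq] using congrFun h (e.symm k)

end Matrix

section CayleyGraph

variable {Γ : Type*} [Group Γ] [Fintype Γ] [DecidableEq Γ] {S : Finset Γ} {τ : ℕ} {u v w : Γ}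

theorem reindex_discG {σ : Equiv.Perm Γ} (hσ : ∀ x y, σ x * (σ y)⁻¹ ∈ S ↔ x * y⁻¹ ∈ S) :
    reindex σ σ (discG Γ S) = discG Γ S := by
  ext x y
  have h_adj : σ.symm x * (σ.symm y)⁻¹ ∈ S ↔ x * y⁻¹ ∈ S := by
    simpa using (hσ (σ.symm x) (σ.symm y)).symm
  simp [discG, adjG, h_adj]

theorem reindex_chebG {σ : Equiv.Perm Γ} (hσ : ∀ x y, σ x * (σ y)⁻¹ ∈ S ↔ x * y⁻¹ ∈ S) :
    reindex σ σ (chebG Γ S τ) = chebG Γ S τ := by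
  rw [chebG, reindex_aeval, reindex_discG hσ]

namespace PSTG

theorem target_unique (hv : PSTG Γ S τ u v) (hw : PSTG Γ S τ u w) : v = w := by
  have h_single : (Pi.single v 1 : Γ → ℂ) = Pi.single w 1 := hv.symm.trans hw
  simpa [Pi.single_apply] using congrFun h_single v

theorem map_perm (h : PSTG Γ S τ u v) {σ : Equiv.Perm Γ}
    (hσ : ∀ x y, σ x * (σ y)⁻¹ ∈ S ↔ x * y⁻¹ ∈ S) :
    PSTG Γ S τ (σ u) (σ v) := by
  have h_image := reindex_mulVec_single_one h σ
  rwa [reindex_chebG hσ] at h_image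

theorem map_mul_right (h : PSTG Γ S τ u v) (g : Γ) : PSTG Γ S τ (u * g) (v * g) :=
  h.map_perm (σ := Equiv.mulRight g) fun x y => by simp [mul_assoc]

theorem map_conj (h : PSTG Γ S τ u v) (hS : ∀ g, ∀ s ∈ S, g * s * g⁻¹ ∈ S) (g : Γ) :
    PSTG Γ S τ (g * u * g⁻¹) (g * v * g⁻¹) := by
  have conj_mem_iff (s : Γ) : g * s * g⁻¹ ∈ S ↔ s ∈ S :=
    ⟨fun hs => by simpa [mul_assoc] using hS g⁻¹ _ hs, hS g s⟩
  refine h.map_perm (σ := (MulAut.conj g).toEquiv) fun x y => ?_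
  simpa [mul_assoc] using conj_mem_iff (x * y⁻¹)

theorem mul_inv_mem_center (h : PSTG Γ S τ u v) (hS : ∀ g, ∀ s ∈ S, g * s * g⁻¹ ∈ S) :
    v * u⁻¹ ∈ Subgroup.center Γ := by
  have h_one : PSTG Γ S τ 1 (v * u⁻¹) := by simpa using h.map_mul_right u⁻¹
  refine Subgroup.mem_center_iff.mpr fun g => ?_
  have h_conj : PSTG Γ S τ 1 (g * (v * u⁻¹) * g⁻¹) := by simpa using h_one.map_conj hS g
  exact mul_inv_eq_iff_eq_mul.mp (h_conj.target_unique h_one)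

end PSTG

theorem stmt_13_general (hΓ : Subgroup.center Γ = ⊥) (hS : ∀ g, ∀ s ∈ S, g * s * g⁻¹ ∈ S)
    (huv : u ≠ v) : ¬ PSTG Γ S τ u v := by
  intro h
  have h_center := h.mul_inv_mem_center hS
  rw [hΓ, Subgroup.mem_bot, mul_inv_eq_one] at h_center
  exact huv h_center.symm

end CayleyGraph

theorem pst_iff_pstg {n : ℕ} [NeZero n] {S : Finset (DihedralGroup n)} {τ : ℕ}
    {u v : DihedralGroup n} : PST n S τ u v ↔ PSTG (DihedralGroup n) S τ u v :=
  Iff.rfl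

theorem stmt_13 (n : ℕ) [NeZero n] (hn : 3 ≤ n) (hodd : Odd n)
    (S : Finset (DihedralGroup n)) (hS1 : (1 : DihedralGroup n) ∉ S)
    (hSinv : ∀ s ∈ S, s⁻¹ ∈ S) (hSne : S.Nonempty)
    (hnormal : IsNormalCay n S) :
    ∀ τ : ℕ, 1 ≤ τ → ∀ u v : DihedralGroup n, u ≠ v → ¬ PST n S τ u v := by
  intro τ _ u v huv
  rw [pst_iff_pstg]
  exact stmt_13_general (DihedralGroup.center_eq_bot_of_odd_ne_one hodd (by lia)) hnormal huv

end PaperPST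
end
end
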